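/- arXiv:1608.03861 — 2 statements merged into one kernel-verified Lean document; each statement's English description precedes it below -/
import Mathlib

section
/- For the GFPGM iterates, for every N ≥ 1, F(x_N) − F(x_*) ≤ L R² / (2 T_{N−1}). -/
open scoped RealInnerProductSpace

/-!
A proximal gradient step `q` from `y` satisfies, for every competitor `z`,
`F q - F z ≤ L ⟪z - y, q - y⟫ - L / 2 ‖q - y‖²`: the descent lemma bounds `f q` from above, the
gradient inequality bounds `f z` from below, and optimality of `q` bounds `φ q - φ z`.

The momentum coefficients are exactly those for which `u i = x i + (T i / t i) • (y i - x i)` moves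
by `u (i + 1) = u i + t i • (x (i + 1) - y i)`. Adding the inequality at `x i` with weight
`T i - t i` and at `z` with weight `t i` completes a square in `u`, up to the error
`L / 2 (t i ^ 2 - T i) ‖x (i + 1) - y i‖² ≤ 0`. Hence
`(T i - t i) (F (x i) - F z) + L / 2 ‖u i - z‖²` does not increase with `i`, and as
`T (i + 1) - t (i + 1) = T i`, `T 0 = t 0`, it starts at `L / 2 ‖x 0 - z‖²`.
-/

open Set AffineMap

section NormedSpace

variable {E G : Type*} [NormedAddCommGroup E] [NormedSpace ℝ E]
  [NormedAddCommGroup G] [NormedSpace ℝ G]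

theorem norm_sub_sub_fderiv_le_of_norm_fderiv_sub_le {g : E → G} {g' : E → E →L[ℝ] G} {a b : E}
    {L : ℝ} (hg : ∀ z ∈ segment ℝ a b, HasFDerivWithinAt g (g' z) (segment ℝ a b) z)
    (hL : ∀ z ∈ segment ℝ a b, ‖g' z - g' a‖ ≤ L * ‖z - a‖) :
    ‖g b - g a - g' a (b - a)‖ ≤ L / 2 * ‖b - a‖ ^ 2 := by
  have hmaps : MapsTo (lineMap a b : ℝ → E) (Icc 0 1) (segment ℝ a b) :=
    fun τ hτ => segment_eq_image_lineMap ℝ a b ▸ mem_image_of_mem _ hτ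
  have hderiv : ∀ τ ∈ Icc (0 : ℝ) 1, HasDerivWithinAt
      (fun τ => g (lineMap a b τ) - g a - τ • g' a (b - a))
      ((g' (lineMap a b τ) - g' a) (b - a)) (Icc 0 1) τ := fun τ hτ => by
    have hline := (hg _ (hmaps hτ)).comp_hasDerivWithinAt τ hasDerivWithinAt_lineMap hmaps
    simpa only [Function.comp_apply, id_eq, one_smul, sub_apply] using
      (hline.sub_const (g a)).fun_sub ((hasDerivWithinAt_id τ _).smul_const (g' a (b - a)))
  have hbound : ∀ τ ∈ Ico (0 : ℝ) 1,
      ‖(g' (lineMap a b τ) - g' a) (b - a)‖ ≤ L / 2 * ‖b - a‖ ^ 2 * (2 * τ) := fun τ hτ => by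
    calc ‖(g' (lineMap a b τ) - g' a) (b - a)‖
        ≤ ‖g' (lineMap a b τ) - g' a‖ * ‖b - a‖ := ContinuousLinearMap.le_opNorm _ _
      _ ≤ L * ‖lineMap a b τ - a‖ * ‖b - a‖ := by
          gcongr
          exact hL _ (hmaps (Ico_subset_Icc_self hτ))
      _ = L / 2 * ‖b - a‖ ^ 2 * (2 * τ) := by
          rw [← dist_eq_norm, dist_lineMap_left, Real.norm_of_nonneg hτ.1, dist_eq_norm']
          ring
  have hgap := image_norm_le_of_norm_deriv_right_le_deriv_boundary
    (B := fun τ => L / 2 * ‖b - a‖ ^ 2 * τ ^ 2)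
    (fun τ hτ => (hderiv τ hτ).continuousWithinAt)
    (fun τ hτ => (hderiv τ (Ico_subset_Icc_self hτ)).mono_of_mem_nhdsWithin
      (Icc_mem_nhdsGE_of_mem hτ))
    (by simp) (fun τ => by simpa using (hasDerivAt_pow 2 τ).const_mul (L / 2 * ‖b - a‖ ^ 2)) hbound
    (right_mem_Icc.2 zero_le_one)
  simpa using hgap

variable {s : Set E} {g φ : E → ℝ} {g' : E →L[ℝ] ℝ} {q z : E}

theorem le_add_fderiv_of_isMinOn_add_convexOn (hφ : ConvexOn ℝ s φ)
    (hg : HasFDerivWithinAt g g' s q) (hmin : IsMinOn (fun w => g w + φ w) s q)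
    (hq : q ∈ s) (hz : z ∈ s) : φ q ≤ φ z + g' (z - q) := by
  have hmaps : MapsTo (lineMap q z : ℝ → E) (Icc 0 1) s :=
    fun τ hτ => hφ.1.lineMap_mem hq hz hτ
  let chord : ℝ → ℝ := fun τ => g (lineMap q z τ) + lineMap (φ q) (φ z) τ
  have hderiv : HasDerivWithinAt chord (g' (z - q) + (φ z - φ q)) (Icc 0 1) 0 := by
    have hg0 : HasFDerivWithinAt g g' s (lineMap q z (0 : ℝ)) := by rwa [lineMap_apply_zero]
    exact (hg0.comp_hasDerivWithinAt 0 hasDerivWithinAt_lineMap hmaps).add hasDerivWithinAt_lineMap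
  have hchord : IsMinOn chord (Icc 0 1) 0 := fun τ hτ => by
    have hconv : φ (lineMap q z τ) ≤ lineMap (φ q) (φ z) τ := by
      simpa only [lineMap_apply_module] using
        hφ.2 hq hz (sub_nonneg.2 hτ.2) hτ.1 (sub_add_cancel 1 τ)
    have hle : g q + φ q ≤ g (lineMap q z τ) + φ (lineMap q z τ) := hmin (hmaps hτ)
    simpa [chord] using hle.trans (by gcongr)
  have hnonneg := hchord.localize.hasFDerivWithinAt_nonneg hderiv.hasFDerivWithinAt
    (sub_mem_posTangentConeAt_of_segment_subset (segment_eq_Icc zero_le_one).subset)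
  rw [sub_zero, ContinuousLinearMap.toSpanSingleton_apply, one_smul] at hnonneg
  linarith

-- Every point minimizes `-φ + φ`.
theorem add_fderiv_le_of_convexOn (hφ : ConvexOn ℝ s φ) (hφ' : HasFDerivWithinAt φ g' s q)
    (hq : q ∈ s) (hz : z ∈ s) : φ q + g' (z - q) ≤ φ z := by
  have h := le_add_fderiv_of_isMinOn_add_convexOn hφ hφ'.neg (fun w _ => by simp) hq hz
  rwa [neg_apply, ← sub_eq_add_neg, le_sub_iff_add_le] at h

end NormedSpace

section InnerProductSpace

variable {E : Type*} [NormedAddCommGroup E] [InnerProductSpace ℝ E]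

/-- The objective minimized by a proximal gradient step from `y`: the smooth part `f`, with gradient
`f'`, is replaced by its quadratic model of curvature `L` at `y`. -/
noncomputable def proxGradModel (L : ℝ) (f : E → ℝ) (f' : E → E) (φ : E → ℝ) (y z : E) : ℝ :=
  f y + ⟪f' y, z - y⟫ + L / 2 * ‖z - y‖ ^ 2 + φ z

variable {L : ℝ} {f : E → ℝ} {f' : E → E} {φ : E → ℝ} {s : Set E} {y q z : E}

theorem le_quadratic_model_of_lipschitz_gradient (hgrad : ∀ z, HasFDerivAt f (innerSL ℝ (f' z)) z)
    (hLip : ∀ u v, ‖f' u - f' v‖ ≤ L * ‖u - v‖) (a b : E) :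
    f b ≤ f a + ⟪f' a, b - a⟫ + L / 2 * ‖b - a‖ ^ 2 := by
  have h := norm_sub_sub_fderiv_le_of_norm_fderiv_sub_le
    (fun z (_ : z ∈ segment ℝ a b) => (hgrad z).hasFDerivWithinAt)
    (fun z _ => by rw [← map_sub, innerSL_apply_norm]; exact hLip z a)
  rw [innerSL_apply_apply] at h
  linarith [le_of_abs_le h]

theorem le_add_inner_of_isMinOn_proxGradModel (hφ : ConvexOn ℝ s φ)
    (hmin : IsMinOn (proxGradModel L f f' φ y) s q) (hq : q ∈ s) (hz : z ∈ s) :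
    φ q ≤ φ z + (⟪f' y, z - q⟫ + L * ⟪q - y, z - q⟫) := by
  have hmodel : HasFDerivAt (fun w => f y + ⟪f' y, w - y⟫ + L / 2 * ‖w - y‖ ^ 2)
      (innerSL ℝ (f' y) + (L / 2) • (2 • innerSL ℝ (q - y))) q := by
    have hsub : HasFDerivAt (fun w => w - y) (ContinuousLinearMap.id ℝ E) q :=
      (hasFDerivAt_id q).sub_const y
    exact (((innerSL ℝ (f' y)).hasFDerivAt.comp q hsub).const_add (f y)).add
      (hsub.norm_sq.const_mul (L / 2))
  have h := le_add_fderiv_of_isMinOn_add_convexOn hφ hmodel.hasFDerivWithinAt hmin hq hz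
  simp only [add_apply, smul_apply, innerSL_apply_apply, smul_eq_mul, nsmul_eq_mul] at h
  linear_combination h

theorem sub_le_inner_of_isMinOn_proxGradModel (hf : ConvexOn ℝ univ f)
    (hgrad : ∀ z, HasFDerivAt f (innerSL ℝ (f' z)) z)
    (hLip : ∀ u v, ‖f' u - f' v‖ ≤ L * ‖u - v‖) (hφ : ConvexOn ℝ s φ)
    (hmin : IsMinOn (proxGradModel L f f' φ y) s q) (hq : q ∈ s) (hz : z ∈ s) :
    f q + φ q - (f z + φ z) ≤ L * ⟪z - y, q - y⟫ - L / 2 * ‖q - y‖ ^ 2 := by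
  have hdescent := le_quadratic_model_of_lipschitz_gradient hgrad hLip y q
  have hgradient : f y + ⟪f' y, z - y⟫ ≤ f z :=
    add_fderiv_le_of_convexOn hf (hgrad y).hasFDerivWithinAt (mem_univ y) (mem_univ z)
  have hprox := le_add_inner_of_isMinOn_proxGradModel hφ hmin hq hz
  rw [← sub_sub_sub_cancel_right z q y, inner_sub_right, inner_sub_right (q - y),
    real_inner_self_eq_norm_sq, real_inner_comm (z - y) (q - y)] at hprox
  linarith

/-- Admissible GFPGM weights: positive `t` with partial sums `T` such that `t i ^ 2 ≤ T i`. -/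
structure IsGFPGMWeights (t T : ℕ → ℝ) : Prop where
  pos : ∀ i, 0 < t i
  eq_sum : ∀ i, T i = ∑ l ∈ Finset.range (i + 1), t l
  sq_le : ∀ i, t i ^ 2 ≤ T i

namespace IsGFPGMWeights

variable {t T : ℕ → ℝ}

theorem zero_eq (h : IsGFPGMWeights t T) : T 0 = t 0 := by
  simp [h.eq_sum]

theorem succ_eq (h : IsGFPGMWeights t T) (i : ℕ) : T (i + 1) = T i + t (i + 1) := by
  rw [h.eq_sum, h.eq_sum, Finset.sum_range_succ]

theorem sum_pos (h : IsGFPGMWeights t T) (i : ℕ) : 0 < T i :=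
  (pow_pos (h.pos i) 2).trans_le (h.sq_le i)

theorem le_sum (h : IsGFPGMWeights t T) (i : ℕ) : t i ≤ T i := by
  rw [h.eq_sum]
  exact Finset.single_le_sum (fun l _ => (h.pos l).le) (Finset.self_mem_range_succ i)

end IsGFPGMWeights

/-- `x` and `y` are the primary and the extrapolated iterates of the generalized fast proximal
gradient method with weights `t`, `T`. The proximal gradient map `p` may be any self-map of `E`. -/
structure IsGFPGM (p : E → E) (t T : ℕ → ℝ) (x y : ℕ → E) : Prop where
  y_zero : y 0 = x 0
  x_succ : ∀ i, x (i + 1) = p (y i)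
  y_succ : ∀ i, y (i + 1) = x (i + 1)
    + ((T i - t i) * t (i + 1) / (t i * T (i + 1))) • (x (i + 1) - x i)
    + ((t i ^ 2 - T i) * t (i + 1) / (t i * T (i + 1))) • (x (i + 1) - y i)

/-- The auxiliary sequence of GFPGM, on the line through `x i` and `y i`; its increments are
multiples of the proximal gradient steps `x (i + 1) - y i`. -/
noncomputable def gfpgmAux (t T : ℕ → ℝ) (x y : ℕ → E) (i : ℕ) : E :=
  lineMap (x i) (y i) (T i / t i)

/-- The Lyapunov function of GFPGM for the objective `F`, relative to the comparison point `z`.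
The weight `T i - t i` stands for `T (i - 1)`, and for `0` at `i = 0`. -/
noncomputable def gfpgmLyapunov (L : ℝ) (F : E → ℝ) (t T : ℕ → ℝ) (x y : ℕ → E) (z : E) (i : ℕ) :
    ℝ :=
  (T i - t i) * (F (x i) - F z) + L / 2 * ‖gfpgmAux t T x y i - z‖ ^ 2

theorem accelerated_step_le {L t T : ℝ} {F : E → ℝ} {x y q z : E} (hL : 0 ≤ L) (ht : 0 < t)
    (htT : t ≤ T) (hsq : t ^ 2 ≤ T)
    (hx : F q - F x ≤ L * ⟪x - y, q - y⟫ - L / 2 * ‖q - y‖ ^ 2)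
    (hz : F q - F z ≤ L * ⟪z - y, q - y⟫ - L / 2 * ‖q - y‖ ^ 2) :
    T * (F q - F z) + L / 2 * ‖lineMap x y (T / t) + t • (q - y) - z‖ ^ 2 ≤
      (T - t) * (F x - F z) + L / 2 * ‖lineMap x y (T / t) - z‖ ^ 2 := by
  set u : E := lineMap x y (T / t) with hu
  have hcombine : (T - t) • (x - y) + t • (z - y) = -(t • (u - z)) := by
    rw [hu, lineMap_apply_module]
    match_scalars <;> field_simp <;> ring
  have hinner : (T - t) * ⟪x - y, q - y⟫ + t * ⟪z - y, q - y⟫ = -(t * ⟪u - z, q - y⟫) := by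
    simpa only [inner_add_left, inner_neg_left, real_inner_smul_left] using
      congrArg (⟪·, q - y⟫) hcombine
  have hsquare : ‖u + t • (q - y) - z‖ ^ 2 =
      ‖u - z‖ ^ 2 + 2 * (t * ⟪u - z, q - y⟫) + t ^ 2 * ‖q - y‖ ^ 2 := by
    rw [add_sub_right_comm, norm_add_sq_real, real_inner_smul_right, norm_smul, mul_pow,
      Real.norm_of_nonneg ht.le]
  have hslack : t ^ 2 * (L / 2 * ‖q - y‖ ^ 2) ≤ T * (L / 2 * ‖q - y‖ ^ 2) := by gcongr
  rw [hsquare]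
  linear_combination (T - t) * hx + t * hz + hslack + L * hinner

namespace IsGFPGM

variable {p : E → E} {t T : ℕ → ℝ} {x y : ℕ → E}

theorem gfpgmAux_zero (h : IsGFPGM p t T x y) : gfpgmAux t T x y 0 = x 0 := by
  simp [gfpgmAux, h.y_zero]

theorem gfpgmAux_succ (h : IsGFPGM p t T x y) (ht : ∀ i, t i ≠ 0) {i : ℕ} (hT : T (i + 1) ≠ 0) :
    gfpgmAux t T x y (i + 1) = gfpgmAux t T x y i + t i • (x (i + 1) - y i) := by
  have hti := ht i
  have hti' := ht (i + 1)
  rw [gfpgmAux, gfpgmAux, h.y_succ, lineMap_apply_module, lineMap_apply_module]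
  match_scalars <;> field_simp <;> ring

variable {L : ℝ} {F : E → ℝ} {s : Set E} {z : E}

theorem gfpgmLyapunov_zero (h : IsGFPGM p t T x y) (hT : T 0 = t 0) :
    gfpgmLyapunov L F t T x y z 0 = L / 2 * ‖x 0 - z‖ ^ 2 := by
  simp [gfpgmLyapunov, h.gfpgmAux_zero, hT]

theorem mem (h : IsGFPGM p t T x y) (hp : ∀ y, p y ∈ s) (hx : x 0 ∈ s) : ∀ i, x i ∈ s
  | 0 => hx
  | i + 1 => h.x_succ i ▸ hp (y i)

theorem antitone_gfpgmLyapunov (h : IsGFPGM p t T x y) (hw : IsGFPGMWeights t T) (hL : 0 ≤ L)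
    (hstep : ∀ y, ∀ w ∈ s, F (p y) - F w ≤ L * ⟪w - y, p y - y⟫ - L / 2 * ‖p y - y‖ ^ 2)
    (hx : ∀ i, x i ∈ s) (hz : z ∈ s) : Antitone (gfpgmLyapunov L F t T x y z) := by
  refine antitone_nat_of_succ_le fun i => ?_
  simp only [gfpgmLyapunov]
  rw [h.gfpgmAux_succ (fun i => (hw.pos i).ne') (hw.sum_pos _).ne', hw.succ_eq,
    add_sub_cancel_right, h.x_succ]
  exact accelerated_step_le hL (hw.pos i) (hw.le_sum i) (hw.sq_le i)
    (hstep (y i) (x i) (hx i)) (hstep (y i) z hz)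

theorem sub_le_of_step_le (h : IsGFPGM p t T x y) (hw : IsGFPGMWeights t T) (hL : 0 ≤ L)
    (hstep : ∀ y, ∀ w ∈ s, F (p y) - F w ≤ L * ⟪w - y, p y - y⟫ - L / 2 * ‖p y - y‖ ^ 2)
    (hx : ∀ i, x i ∈ s) (hz : z ∈ s) (n : ℕ) :
    F (x (n + 1)) - F z ≤ L * ‖x 0 - z‖ ^ 2 / (2 * T n) := by
  rw [le_div_iff₀ (mul_pos two_pos (hw.sum_pos n))]
  have hgap : T n * (F (x (n + 1)) - F z) ≤ gfpgmLyapunov L F t T x y z (n + 1) := by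
    rw [gfpgmLyapunov, hw.succ_eq, add_sub_cancel_right]
    exact le_add_of_nonneg_right (by positivity)
  have hdecrease := h.antitone_gfpgmLyapunov hw hL hstep hx hz (Nat.zero_le (n + 1))
  rw [h.gfpgmLyapunov_zero hw.zero_eq] at hdecrease
  linarith

end IsGFPGM

-- The set `s` is the effective domain of an extended-valued convex `φ`.
theorem gfpgm_cost_bound_general {L : ℝ} (hL : 0 ≤ L) {f : E → ℝ} {f' : E → E} {φ : E → ℝ}
    {s : Set E} (hf : ConvexOn ℝ univ f) (hgrad : ∀ z, HasFDerivAt f (innerSL ℝ (f' z)) z)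
    (hLip : ∀ u v, ‖f' u - f' v‖ ≤ L * ‖u - v‖) (hφ : ConvexOn ℝ s φ) {p : E → E}
    (hps : ∀ y, p y ∈ s) (hp : ∀ y, IsMinOn (proxGradModel L f f' φ y) s (p y))
    {t T : ℕ → ℝ} (hw : IsGFPGMWeights t T) {x y : ℕ → E} (h : IsGFPGM p t T x y)
    (hx : x 0 ∈ s) {z : E} (hz : z ∈ s) (n : ℕ) :
    f (x (n + 1)) + φ (x (n + 1)) - (f z + φ z) ≤ L * ‖x 0 - z‖ ^ 2 / (2 * T n) :=
  h.sub_le_of_step_le (F := fun w => f w + φ w) hw hL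
    (fun y _ => sub_le_inner_of_isMinOn_proxGradModel hf hgrad hLip hφ (hp y) (hps y))
    (h.mem hps hx) hz n

end InnerProductSpace

/-- the GFPGM iterates satisfy F(x_N) − F(x_*) ≤ LR²/(2T_{N−1}) for N ≥ 1. -/
theorem gfpgm_cost_bound
    {E : Type*} [NormedAddCommGroup E] [InnerProductSpace ℝ E]
    (L : ℝ) (hL : 0 < L)
    (f : E → ℝ) (f' : E → E) (φ : E → ℝ)
    (hf : ConvexOn ℝ Set.univ f)
    (hgrad : ∀ z : E, HasFDerivAt f (innerSL ℝ (f' z)) z)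
    (hLip : ∀ u v : E, ‖f' u - f' v‖ ≤ L * ‖u - v‖)
    (hφ : ConvexOn ℝ Set.univ φ)
    (p : E → E)
    (hp : ∀ y : E, IsMinOn
      (fun z => f y + ⟪f' y, z - y⟫ + L / 2 * ‖z - y‖ ^ 2 + φ z) Set.univ (p y))
    (xs : E) (hxs : IsMinOn (fun z => f z + φ z) Set.univ xs)
    (R : ℝ) (hR0 : 0 ≤ R)
    (t T : ℕ → ℝ) (ht0 : t 0 = 1) (htpos : ∀ i, 0 < t i)
    (hT : ∀ i, T i = ∑ l ∈ Finset.range (i + 1), t l)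
    (htT : ∀ i, t i ^ 2 ≤ T i)
    (x y : ℕ → E)
    (hy0 : y 0 = x 0)
    (hx : ∀ i, x (i + 1) = p (y i))
    (hy : ∀ i, y (i + 1) = x (i + 1)
        + ((T i - t i) * t (i + 1) / (t i * T (i + 1))) • (x (i + 1) - x i)
        + ((t i ^ 2 - T i) * t (i + 1) / (t i * T (i + 1))) • (x (i + 1) - y i))
    (hR : ‖x 0 - xs‖ ≤ R)
    (N : ℕ) (hN : 1 ≤ N) :
    f (x N) + φ (x N) - (f xs + φ xs) ≤ L * R ^ 2 / (2 * T (N - 1)) := by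
  obtain ⟨n, rfl⟩ := Nat.exists_eq_add_of_le' hN
  have hw : IsGFPGMWeights t T := ⟨htpos, hT, htT⟩
  have hTn := hw.sum_pos n
  exact (gfpgm_cost_bound_general hL.le hf hgrad hLip hφ (fun _ => mem_univ _) hp hw
    ⟨hy0, hx, hy⟩ (mem_univ _) (mem_univ xs) n).trans (by rw [Nat.add_sub_cancel]; gcongr)
end

section
/- For the FPGM-OPG iterates (GFPGM run with the FPGM-OPG parameters), for every N ≥ 1, F(x_N) − F(x_*) ≤ 4 L R² / (N(N + 4)). -/
open scoped RealInnerProductSpace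

/-!
Write `F = f + φ` and let `q` be a proximal gradient step from `y`. The model minimized by `q` is
`L`-strongly convex and lies above `F` at `q` (descent lemma), while its smooth part lies below
`f + L / 2 ‖· - y‖²` (convexity), so `F q + L / 2 ‖q - z‖² ≤ F z + L / 2 ‖z - y‖²` for every `z`.

Apply this at `y i` with `x i` in place of `z`, weighted by `T i - t i`, and with a fixed `z`,
weighted by `t i`. The momentum coefficients are exactly those for which the points `u i`, defined
by `u 0 = x 0` and `u (i + 1) = u i + t i • (x (i + 1) - y i)`, satisfy
`T i • y i = (T i - t i) • x i + t i • u i`. With this relation the weighted sum says that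
`T (i - 1) (F (x i) - F z) + L / 2 ‖u i - z‖²` is nonincreasing as long as `t i ^ 2 ≤ T i`,
where `T (-1) = 0`; hence `F (x N) - F z ≤ L ‖x 0 - z‖² / (2 T (N - 1))`.

For the FPGM-OPG parameters let `k = ⌈N / 2⌉ - 1`. The FISTA recursion keeps `T i = t i ^ 2` and
raises `t` by at least `1 / 2` per step, so `T k = t k ^ 2` with `t k ≥ (k + 2) / 2`. The later
parameters do not exceed `t k`, so `t i ^ 2 ≤ T i` persists, and adding their arithmetic progression
gives `T (N - 1) ≥ N (N + 4) / 8`.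
-/

section FirstOrder

variable {E : Type*} [NormedAddCommGroup E] [NormedSpace ℝ E]

lemma add_fderiv_apply_sub_le_of_convexOn {s : Set E} {f : E → ℝ} {f' : E →L[ℝ] ℝ} {y z : E}
    (hf : ConvexOn ℝ s f) (hf' : HasFDerivAt f f' y) (hy : y ∈ s) (hz : z ∈ s) :
    f y + f' (z - y) ≤ f z := by
  have hline : HasDerivAt (f ∘ AffineMap.lineMap (k := ℝ) y z) (f' (z - y)) 0 :=
    HasFDerivAt.comp_hasDerivAt 0 (by simpa using hf') AffineMap.hasDerivAt_lineMap
  have hslope := (hf.comp_affineMap (AffineMap.lineMap y z)).le_slope_of_hasDerivAt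
    (by simpa using hy) (by simpa using hz) zero_lt_one hline
  simp only [slope_def_field, Function.comp_apply, AffineMap.lineMap_apply_zero,
    AffineMap.lineMap_apply_one, sub_zero, div_one] at hslope
  linarith

lemma norm_sub_sub_fderiv_apply_sub_le_of_lipschitz {G : Type*} [NormedAddCommGroup G]
    [NormedSpace ℝ G] {f : E → G} {f' : E → E →L[ℝ] G} {L : ℝ} {y z : E}
    (hf' : ∀ w ∈ segment ℝ y z, HasFDerivAt f (f' w) w)
    (hLip : ∀ w ∈ segment ℝ y z, ‖f' w - f' y‖ ≤ L * ‖w - y‖) :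
    ‖f z - f y - f' y (z - y)‖ ≤ L / 2 * ‖z - y‖ ^ 2 := by
  have hseg : ∀ r ∈ Set.Icc (0 : ℝ) 1, AffineMap.lineMap y z r ∈ segment ℝ y z := fun r hr =>
    segment_eq_image_lineMap ℝ y z ▸ Set.mem_image_of_mem _ hr
  have hremainder : ∀ r ∈ Set.Icc (0 : ℝ) 1,
      HasDerivAt (fun r : ℝ => f (AffineMap.lineMap y z r) - f y - r • f' y (z - y))
        ((f' (AffineMap.lineMap y z r) - f' y) (z - y)) r := fun r hr => by
    refine ((((hf' _ (hseg r hr)).comp_hasDerivAt r AffineMap.hasDerivAt_lineMap).sub_const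
      (f y)).sub ((hasDerivAt_id r).smul_const (f' y (z - y)))).congr_deriv ?_
    rw [one_smul, sub_apply]
  have hbound : ∀ r : ℝ, HasDerivAt (fun r => L / 2 * ‖z - y‖ ^ 2 * r ^ 2)
      (L * (r * ‖z - y‖) * ‖z - y‖) r := fun r =>
    ((hasDerivAt_pow 2 r).const_mul _).congr_deriv (by ring)
  have hle : ∀ r ∈ Set.Ico (0 : ℝ) 1, ‖(f' (AffineMap.lineMap y z r) - f' y) (z - y)‖
      ≤ L * (r * ‖z - y‖) * ‖z - y‖ := fun r hr => by
    refine ContinuousLinearMap.le_of_opNorm_le _ ?_ _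
    simpa [AffineMap.lineMap_apply, norm_smul, abs_of_nonneg hr.1] using
      hLip _ (hseg r (Set.Ico_subset_Icc_self hr))
  simpa using image_norm_le_of_norm_deriv_right_le_deriv_boundary
    (fun r hr => (hremainder r hr).continuousAt.continuousWithinAt)
    (fun r hr => (hremainder r (Set.Ico_subset_Icc_self hr)).hasDerivWithinAt)
    (by simp) hbound hle (Set.right_mem_Icc.2 zero_le_one)

lemma add_modulus_le_of_isMinOn_of_uniformConvexOn {s : Set E} {ψ : ℝ → ℝ} {f : E → ℝ} {q z : E}
    (hf : UniformConvexOn s ψ f) (hmin : IsMinOn f s q) (hq : q ∈ s) (hz : z ∈ s) :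
    f q + ψ ‖q - z‖ ≤ f z := by
  have hlt : ∀ a ∈ Set.Ioo (0 : ℝ) 1, f q + a * ψ ‖q - z‖ ≤ f z := fun a ⟨ha₀, ha₁⟩ => by
    have hb : 0 < 1 - a := sub_pos.2 ha₁
    have hle : f q ≤ a • f q + (1 - a) • f z - a * (1 - a) * ψ ‖q - z‖ :=
      (hmin (hf.1 hq hz ha₀.le hb.le (add_sub_cancel a 1))).trans
        (hf.2 hq hz ha₀.le hb.le (add_sub_cancel a 1))
    simp only [smul_eq_mul] at hle
    refine le_of_mul_le_mul_left ?_ hb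
    linarith
  have hlim : Filter.Tendsto (fun a : ℝ => f q + a * ψ ‖q - z‖) (nhdsWithin 1 (Set.Iio 1))
      (nhds (f q + 1 * ψ ‖q - z‖)) :=
    (Continuous.tendsto (by fun_prop) 1).mono_left nhdsWithin_le_nhds
  rw [one_mul] at hlim
  exact le_of_tendsto hlim (Filter.mem_of_superset (Ioo_mem_nhdsLT zero_lt_one) hlt)

end FirstOrder

section ProximalGradient

variable {E : Type*} [NormedAddCommGroup E] [InnerProductSpace ℝ E]
  {L : ℝ} {f : E → ℝ} {f' : E → E} {φ : E → ℝ}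

/-- The quadratic model of `f` at `y` plus the nonsmooth part `φ`: the function of `z` that a
proximal gradient step from `y` minimizes. -/
noncomputable def proxModel (L : ℝ) (f : E → ℝ) (f' : E → E) (φ : E → ℝ) (y z : E) : ℝ :=
  f y + ⟪f' y, z - y⟫ + L / 2 * ‖z - y‖ ^ 2 + φ z

lemma strongConvexOn_proxModel {s : Set E} (hφ : ConvexOn ℝ s φ) (y : E) :
    StrongConvexOn s L (proxModel L f f' φ y) := by
  rw [strongConvexOn_iff_convex]
  have haffine : (fun z => proxModel L f f' φ y z - L / 2 * ‖z‖ ^ 2)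
      = fun z => φ z + innerSL ℝ (f' y - L • y) z
          + (f y - ⟪f' y, y⟫ + L / 2 * ‖y‖ ^ 2) := by
    ext z
    simp only [proxModel, norm_sub_sq_real, inner_sub_right, innerSL_apply_apply, inner_sub_left,
      real_inner_smul_left, real_inner_comm y z]
    ring
  rw [haffine]
  exact (hφ.add ((innerSL ℝ (f' y - L • y)).toLinearMap.convexOn hφ.1)).add_const _

theorem prox_gradient_inequality (hf : ConvexOn ℝ Set.univ f)
    (hgrad : ∀ z, HasFDerivAt f (innerSL ℝ (f' z)) z)
    (hLip : ∀ u v, ‖f' u - f' v‖ ≤ L * ‖u - v‖) (hφ : ConvexOn ℝ Set.univ φ) {y q : E}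
    (hq : IsMinOn (proxModel L f f' φ y) Set.univ q) (z : E) :
    f q + φ q + L / 2 * ‖q - z‖ ^ 2 ≤ f z + φ z + L / 2 * ‖z - y‖ ^ 2 := by
  have hdescent : ‖f q - f y - innerSL ℝ (f' y) (q - y)‖ ≤ L / 2 * ‖q - y‖ ^ 2 :=
    norm_sub_sub_fderiv_apply_sub_le_of_lipschitz (f' := fun w => innerSL ℝ (f' w))
      (fun w _ => hgrad w) fun w _ => by simpa only [← map_sub, innerSL_apply_norm] using hLip w y
  have hupper : f q + φ q ≤ proxModel L f f' φ y q := by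
    have := (Real.le_norm_self _).trans hdescent
    simp only [proxModel, innerSL_apply_apply] at this ⊢
    linarith
  have hlower : proxModel L f f' φ y z ≤ f z + φ z + L / 2 * ‖z - y‖ ^ 2 := by
    have := add_fderiv_apply_sub_le_of_convexOn hf (hgrad y) (Set.mem_univ y) (Set.mem_univ z)
    simp only [proxModel, innerSL_apply_apply] at this ⊢
    linarith
  have hgrowth := add_modulus_le_of_isMinOn_of_uniformConvexOn (strongConvexOn_proxModel hφ y) hq
    (Set.mem_univ q) (Set.mem_univ z)
  linarith

end ProximalGradient

section Extrapolation

variable {E : Type*} [AddCommGroup E] [Module ℝ E] {N i : ℕ} {t : ℕ → ℝ} {x y : ℕ → E}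

/-- The sum of the first `n` parameters. The paper's `T i` includes `t i`, so it is
`paramSum t (i + 1)`, and `T i - t i` is `paramSum t i`. -/
def paramSum (t : ℕ → ℝ) (n : ℕ) : ℝ := ∑ l ∈ Finset.range n, t l

lemma paramSum_zero (t : ℕ → ℝ) : paramSum t 0 = 0 := Finset.sum_range_zero t

lemma paramSum_succ (t : ℕ → ℝ) (n : ℕ) : paramSum t (n + 1) = paramSum t n + t n :=
  Finset.sum_range_succ t n

lemma paramSum_nonneg {n : ℕ} (ht : ∀ l < n, 0 ≤ t l) : 0 ≤ paramSum t n :=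
  Finset.sum_nonneg fun l hl => ht l (Finset.mem_range.1 hl)

/-- The extrapolation rule of GFPGM over `N` iterations: it produces `y` from the main iterates `x`,
however these are computed. -/
structure IsGFPGMExtrapolation (N : ℕ) (t : ℕ → ℝ) (x y : ℕ → E) : Prop where
  zero : y 0 = x 0
  succ : ∀ i, i + 1 < N → y (i + 1) = x (i + 1)
    + ((paramSum t (i + 1) - t i) * t (i + 1) / (t i * paramSum t (i + 2))) • (x (i + 1) - x i)
    + ((t i ^ 2 - paramSum t (i + 1)) * t (i + 1) / (t i * paramSum t (i + 2)))
      • (x (i + 1) - y i)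

/-- The auxiliary sequence `u` of the energy argument: it starts at `x 0` and accumulates the steps
`x (i + 1) - y i` with weights `t i`. -/
def momentumPoint (t : ℕ → ℝ) (x y : ℕ → E) (i : ℕ) : E :=
  x 0 + ∑ l ∈ Finset.range i, t l • (x (l + 1) - y l)

lemma momentumPoint_zero : momentumPoint t x y 0 = x 0 := by
  simp [momentumPoint]

lemma momentumPoint_succ :
    momentumPoint t x y (i + 1) = momentumPoint t x y i + t i • (x (i + 1) - y i) := by
  rw [momentumPoint, momentumPoint, Finset.sum_range_succ, add_assoc]

lemma IsGFPGMExtrapolation.paramSum_smul (hy : IsGFPGMExtrapolation N t x y)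
    (ht : ∀ i < N, 0 < t i) (hi : i < N) :
    paramSum t (i + 1) • y i = paramSum t i • x i + t i • momentumPoint t x y i := by
  induction i with
  | zero => simp [paramSum_succ, paramSum_zero, momentumPoint_zero, hy.zero]
  | succ i ih =>
    have hti : t i ≠ 0 := (ht i (by omega)).ne'
    have hT : paramSum t (i + 2) ≠ 0 := by
      rw [paramSum_succ]
      exact (add_pos_of_nonneg_of_pos (paramSum_nonneg fun l hl => (ht l (hl.trans hi)).le)
        (ht _ hi)).ne'
    have hclear : ∀ c : ℝ, t i * paramSum t (i + 2) * (c / (t i * paramSum t (i + 2))) = c :=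
      fun c => mul_div_cancel₀ c (mul_ne_zero hti hT)
    have hprev := ih (by omega)
    refine smul_right_injective E hti ?_
    dsimp only
    rw [smul_smul, hy.succ i hi, smul_add, smul_add, smul_smul, smul_smul, hclear, hclear,
      momentumPoint_succ, paramSum_succ t (i + 1)]
    rw [paramSum_succ t i] at hprev ⊢
    linear_combination (norm := module) t (i + 1) • hprev

end Extrapolation

section Energy

variable {E : Type*} [NormedAddCommGroup E] [InnerProductSpace ℝ E] {L : ℝ} {F : E → ℝ}
  {N i : ℕ} {t : ℕ → ℝ} {x y : ℕ → E}

/-- The Lyapunov function of GFPGM relative to the comparison point `z`. -/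
noncomputable def energy (L : ℝ) (F : E → ℝ) (t : ℕ → ℝ) (x y : ℕ → E)
    (z : E) (i : ℕ) : ℝ :=
  paramSum t i * (F (x i) - F z) + L / 2 * ‖momentumPoint t x y i - z‖ ^ 2

lemma weighted_three_point_identity {S a : ℝ} {x y q u z : E}
    (hu : (S + a) • y = S • x + a • u) :
    S * (‖x - y‖ ^ 2 - ‖q - x‖ ^ 2) + a * (‖z - y‖ ^ 2 - ‖q - z‖ ^ 2)
      = ‖u - z‖ ^ 2 - ‖u + a • (q - y) - z‖ ^ 2 - (S + a - a ^ 2) * ‖q - y‖ ^ 2 := by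
  have hshift : ∀ w, ‖w - y‖ ^ 2 - ‖q - w‖ ^ 2 = 2 * ⟪q - y, w - y⟫ - ‖q - y‖ ^ 2 := fun w => by
    rw [← sub_sub_sub_cancel_right q w y, norm_sub_sq_real (q - y)]
    ring
  have hcombine : S * ⟪q - y, x - y⟫ + a * ⟪q - y, z - y⟫ = -(a * ⟪u - z, q - y⟫) := by
    have hvec : S • (x - y) + a • (z - y) = -(a • (u - z)) := by
      linear_combination (norm := module) (-1 : ℝ) • hu
    rw [← inner_smul_right, ← inner_smul_right, ← inner_add_right, hvec, inner_neg_right,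
      inner_smul_right, real_inner_comm]
  rw [hshift, hshift, add_sub_right_comm, norm_add_sq_real, inner_smul_right, norm_smul, mul_pow,
    Real.norm_eq_abs, sq_abs]
  linear_combination 2 * hcombine

lemma energy_succ_le (hL : 0 ≤ L) (hy : IsGFPGMExtrapolation N t x y) (ht : ∀ i < N, 0 < t i)
    (hi : i < N) (hsq : t i ^ 2 ≤ paramSum t (i + 1))
    (hstep : ∀ z, F (x (i + 1)) + L / 2 * ‖x (i + 1) - z‖ ^ 2 ≤ F z + L / 2 * ‖z - y i‖ ^ 2)
    (z : E) : energy L F t x y z (i + 1) ≤ energy L F t x y z i := by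
  have hu := hy.paramSum_smul ht hi
  rw [paramSum_succ] at hu hsq
  have hident := weighted_three_point_identity (q := x (i + 1)) (z := z) hu
  have hprev := mul_le_mul_of_nonneg_left (hstep (x i))
    (paramSum_nonneg fun l hl => (ht l (hl.trans hi)).le)
  have hcomp := mul_le_mul_of_nonneg_left (hstep z) (ht i hi).le
  have hdefect : 0 ≤ L / 2 * ((paramSum t i + t i - t i ^ 2) * ‖x (i + 1) - y i‖ ^ 2) :=
    mul_nonneg (by positivity) (mul_nonneg (sub_nonneg.2 hsq) (sq_nonneg _))
  rw [energy, energy, momentumPoint_succ, paramSum_succ]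
  linear_combination hprev + hcomp + hdefect + L / 2 * hident

theorem IsGFPGMExtrapolation.paramSum_mul_sub_le (hL : 0 ≤ L) (hy : IsGFPGMExtrapolation N t x y)
    (ht : ∀ i < N, 0 < t i) (hsq : ∀ i < N, t i ^ 2 ≤ paramSum t (i + 1))
    (hstep : ∀ i < N, ∀ z,
      F (x (i + 1)) + L / 2 * ‖x (i + 1) - z‖ ^ 2 ≤ F z + L / 2 * ‖z - y i‖ ^ 2) (z : E) :
    paramSum t N * (F (x N) - F z) ≤ L / 2 * ‖x 0 - z‖ ^ 2 := by
  have hdecr : ∀ n ≤ N, energy L F t x y z n ≤ energy L F t x y z 0 := fun n => by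
    induction n with
    | zero => exact fun _ => le_rfl
    | succ n ih =>
      exact fun hn => (energy_succ_le hL hy ht hn (hsq n hn) (hstep n hn) z).trans (ih (by omega))
  calc paramSum t N * (F (x N) - F z)
      ≤ energy L F t x y z N := le_add_of_nonneg_right (by positivity)
    _ ≤ energy L F t x y z 0 := hdecr N le_rfl
    _ = L / 2 * ‖x 0 - z‖ ^ 2 := by
      rw [energy, paramSum_zero, momentumPoint_zero, zero_mul, zero_add]

end Energy

section Parameters

variable {N : ℕ} {t : ℕ → ℝ}

/-- The FISTA update of the momentum parameter: the larger root `s` of `s ^ 2 = a ^ 2 + s`. -/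
noncomputable def fistaNext (a : ℝ) : ℝ := (1 + Real.sqrt (1 + 4 * a ^ 2)) / 2

lemma fistaNext_sq (a : ℝ) : fistaNext a ^ 2 = a ^ 2 + fistaNext a := by
  have := Real.sq_sqrt (show 0 ≤ 1 + 4 * a ^ 2 by positivity)
  rw [fistaNext]
  linarith

lemma add_half_le_fistaNext (a : ℝ) : a + 1 / 2 ≤ fistaNext a := by
  have : 2 * a ≤ Real.sqrt (1 + 4 * a ^ 2) := Real.le_sqrt_of_sq_le (by linarith)
  rw [fistaNext]
  linarith

lemma paramSum_eq_sq_of_fista {m : ℕ} (h₀ : t 0 = 1)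
    (hrec : ∀ i < m, t (i + 1) = fistaNext (t i)) : ∀ i ≤ m, paramSum t (i + 1) = t i ^ 2 := by
  intro i
  induction i with
  | zero => simp [paramSum_succ, paramSum_zero, h₀]
  | succ i ih =>
    intro hi
    rw [paramSum_succ, ih (by omega), hrec i hi, fistaNext_sq]

lemma add_two_div_two_le_of_fista {m : ℕ} (h₀ : t 0 = 1)
    (hrec : ∀ i < m, t (i + 1) = fistaNext (t i)) : ∀ i ≤ m, ((i : ℝ) + 2) / 2 ≤ t i := by
  intro i
  induction i with
  | zero => simp [h₀]
  | succ i ih =>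
    intro hi
    have := ih (by omega)
    have := add_half_le_fistaNext (t i)
    rw [hrec i hi]
    push_cast
    linarith

/-- The FPGM-OPG parameters for `N` iterations: FISTA parameters on the first half, an arithmetic
progression on the second. The natural-number division `(N + 1) / 2` is `⌈N / 2⌉`. -/
structure IsOPGParams (N : ℕ) (t : ℕ → ℝ) : Prop where
  zero : t 0 = 1
  fista : ∀ i, i + 2 ≤ (N + 1) / 2 → t (i + 1) = fistaNext (t i)
  arith : ∀ i, (N + 1) / 2 ≤ i + 1 → i + 2 ≤ N → t (i + 1) = ((N : ℝ) - i) / 2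

namespace IsOPGParams

variable {i j k : ℕ}

lemma paramSum_eq_sq (ht : IsOPGParams N t) (hi : i + 1 ≤ (N + 1) / 2) :
    paramSum t (i + 1) = t i ^ 2 :=
  paramSum_eq_sq_of_fista ht.zero (fun l hl => ht.fista l (by omega)) i le_rfl

lemma add_two_div_two_le (ht : IsOPGParams N t) (hi : i + 1 ≤ (N + 1) / 2) :
    ((i : ℝ) + 2) / 2 ≤ t i :=
  add_two_div_two_le_of_fista ht.zero (fun l hl => ht.fista l (by omega)) i le_rfl

lemma paramSum_add (ht : IsOPGParams N t) (hk : k + 1 = (N + 1) / 2) (hj : k + 1 + j ≤ N) :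
    paramSum t (k + 1 + j) = t k ^ 2 + j * (2 * ((N : ℝ) - k) - j + 1) / 4 := by
  induction j with
  | zero => simp [ht.paramSum_eq_sq hk.le]
  | succ j ih =>
    rw [← add_assoc, paramSum_succ, ih (by omega), add_right_comm k 1 j,
      ht.arith (k + j) (by omega) (by omega)]
    push_cast
    ring

lemma pos (ht : IsOPGParams N t) (hi : i < N) : 0 < t i := by
  rcases le_or_gt (i + 1) ((N + 1) / 2) with hfirst | hsecond
  · exact lt_of_lt_of_le (by positivity) (ht.add_two_div_two_le hfirst)
  · obtain ⟨i, rfl⟩ : ∃ l, i = l + 1 := Nat.exists_eq_succ_of_ne_zero (by omega)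
    have : (i : ℝ) + 2 ≤ N := by exact_mod_cast hi
    rw [ht.arith i (by omega) hi]
    linarith

lemma sq_le_paramSum (ht : IsOPGParams N t) (hi : i < N) : t i ^ 2 ≤ paramSum t (i + 1) := by
  rcases le_or_gt (i + 1) ((N + 1) / 2) with hfirst | hsecond
  · exact (ht.paramSum_eq_sq hfirst).ge
  · obtain ⟨k, hk⟩ : ∃ k, k + 1 = (N + 1) / 2 := ⟨(N + 1) / 2 - 1, by omega⟩
    obtain ⟨j, rfl⟩ : ∃ j, i = k + j + 1 := ⟨i - k - 1, by omega⟩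
    have hN : (N : ℝ) ≤ 2 * k + 2 := by exact_mod_cast (by omega : N ≤ 2 * k + 2)
    have hj : (k : ℝ) + j + 2 ≤ N := by exact_mod_cast (by omega : k + j + 2 ≤ N)
    have hle : t (k + j + 1) ≤ t k := by
      have := ht.add_two_div_two_le hk.le
      rw [ht.arith (k + j) (by omega) (by omega)]
      push_cast
      linarith [j.cast_nonneg (α := ℝ)]
    rw [show k + j + 1 + 1 = k + 1 + (j + 1) by ring, ht.paramSum_add hk (by omega)]
    refine (pow_le_pow_left₀ (ht.pos hi).le hle 2).trans (le_add_of_nonneg_right ?_)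
    push_cast
    exact div_nonneg (mul_nonneg (by positivity) (by linarith)) (by norm_num)

lemma le_paramSum (ht : IsOPGParams N t) (hN : 1 ≤ N) :
    (N : ℝ) * (N + 4) / 8 ≤ paramSum t N := by
  obtain ⟨k, hk⟩ : ∃ k, k + 1 = (N + 1) / 2 := ⟨(N + 1) / 2 - 1, by omega⟩
  obtain ⟨j, rfl⟩ : ∃ j, N = k + 1 + j := ⟨N - (k + 1), by omega⟩
  have htk : (((k : ℝ) + 2) / 2) ^ 2 ≤ t k ^ 2 :=
    pow_le_pow_left₀ (by positivity) (ht.add_two_div_two_le hk.le) 2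
  rw [ht.paramSum_add hk le_rfl]
  push_cast
  linarith [sq_nonneg ((j : ℝ) - k), k.cast_nonneg (α := ℝ)]

end IsOPGParams

end Parameters

theorem fpgm_opg_cost_bound_general {E : Type*} [NormedAddCommGroup E] [InnerProductSpace ℝ E]
    {L : ℝ} (hL : 0 ≤ L) {f : E → ℝ} {f' : E → E} {φ : E → ℝ} (hf : ConvexOn ℝ Set.univ f)
    (hgrad : ∀ z, HasFDerivAt f (innerSL ℝ (f' z)) z)
    (hLip : ∀ u v, ‖f' u - f' v‖ ≤ L * ‖u - v‖) (hφ : ConvexOn ℝ Set.univ φ)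
    {N : ℕ} (hN : 1 ≤ N) {t : ℕ → ℝ} (ht : IsOPGParams N t) {x y : ℕ → E}
    (hx : ∀ i < N, IsMinOn (proxModel L f f' φ (y i)) Set.univ (x (i + 1)))
    (hy : IsGFPGMExtrapolation N t x y) (z : E) :
    f (x N) + φ (x N) - (f z + φ z) ≤ 4 * L * ‖x 0 - z‖ ^ 2 / ((N : ℝ) * ((N : ℝ) + 4)) := by
  have henergy : paramSum t N * (f (x N) + φ (x N) - (f z + φ z)) ≤ L / 2 * ‖x 0 - z‖ ^ 2 :=
    hy.paramSum_mul_sub_le (F := fun w => f w + φ w) hL (fun _ => ht.pos)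
      (fun _ => ht.sq_le_paramSum)
      (fun i hi => prox_gradient_inequality hf hgrad hLip hφ (hx i hi)) z
  have hN₀ : (0 : ℝ) < N * (N + 4) / 8 := by positivity
  calc f (x N) + φ (x N) - (f z + φ z)
      ≤ L / 2 * ‖x 0 - z‖ ^ 2 / paramSum t N :=
        (le_div_iff₀' (hN₀.trans_le (ht.le_paramSum hN))).2 henergy
    _ ≤ L / 2 * ‖x 0 - z‖ ^ 2 / (N * (N + 4) / 8) := by gcongr; exact ht.le_paramSum hN
    _ = 4 * L * ‖x 0 - z‖ ^ 2 / (N * (N + 4)) := by field_simp; ring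

/-- FPGM-OPG (GFPGM with the FPGM-OPG parameters, where
t_{i+1} follows the FISTA recursion for 0 ≤ i ≤ ⌈N/2⌉−2 and t_{i+1} = (N−i)/2 for
⌈N/2⌉−1 ≤ i ≤ N−2) satisfies F(x_N) − F(x_*) ≤ 4LR²/(N(N+4)) for N ≥ 1. -/
theorem fpgm_opg_cost_bound
    {E : Type*} [NormedAddCommGroup E] [InnerProductSpace ℝ E]
    (L : ℝ) (hL : 0 < L)
    (f : E → ℝ) (f' : E → E) (φ : E → ℝ)
    (hf : ConvexOn ℝ Set.univ f)
    (hgrad : ∀ z : E, HasFDerivAt f (innerSL ℝ (f' z)) z)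
    (hLip : ∀ u v : E, ‖f' u - f' v‖ ≤ L * ‖u - v‖)
    (hφ : ConvexOn ℝ Set.univ φ)
    (p : E → E)
    (hp : ∀ y : E, IsMinOn
      (fun z => f y + ⟪f' y, z - y⟫ + L / 2 * ‖z - y‖ ^ 2 + φ z) Set.univ (p y))
    (xs : E) (hxs : IsMinOn (fun z => f z + φ z) Set.univ xs)
    (R : ℝ) (hR0 : 0 ≤ R)
    (N : ℕ) (hN : 1 ≤ N)
    (t T : ℕ → ℝ) (ht0 : t 0 = 1)
    (ht1 : ∀ i, i + 2 ≤ (N + 1) / 2 → t (i + 1) = (1 + Real.sqrt (1 + 4 * t i ^ 2)) / 2)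
    (ht2 : ∀ i, (N + 1) / 2 ≤ i + 1 → i + 2 ≤ N → t (i + 1) = ((N : ℝ) - i) / 2)
    (hT : ∀ i, T i = ∑ l ∈ Finset.range (i + 1), t l)
    (x y : ℕ → E)
    (hy0 : y 0 = x 0)
    (hx : ∀ i < N, x (i + 1) = p (y i))
    (hy : ∀ i, i + 1 < N → y (i + 1) = x (i + 1)
        + ((T i - t i) * t (i + 1) / (t i * T (i + 1))) • (x (i + 1) - x i)
        + ((t i ^ 2 - T i) * t (i + 1) / (t i * T (i + 1))) • (x (i + 1) - y i))
    (hR : ‖x 0 - xs‖ ≤ R) :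
    f (x N) + φ (x N) - (f xs + φ xs) ≤ 4 * L * R ^ 2 / ((N : ℝ) * ((N : ℝ) + 4)) := by
  obtain rfl : T = fun i => paramSum t (i + 1) := funext hT
  exact (fpgm_opg_cost_bound_general hL.le hf hgrad hLip hφ hN ⟨ht0, ht1, ht2⟩
    (fun i hi => hx i hi ▸ hp (y i)) ⟨hy0, hy⟩ xs).trans (by gcongr)
end
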